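/- Let N ≥ 1 and for each i ∈ {1,…,N} let B_i : ℝ → ℝ be strictly convex, positively p_i-homogeneous with p_i > 1, and differentiable, and set b_i(s) = (1/p_i) · B_i'(s). Let r ≥ 1 be real, t > 0, and let s, s₀ : Fin N → ℝ with s₀(i) ≠ 0 for every i. Then ∑_{i=1}^N b_i(s₀(i)) · (r·t^((r−1)/r)·s(i) − (r−1)·t·s₀(i)) ≤ ∑_{i=1}^N B_i(s(i))^(r/p_i) · B_i(s₀(i))^((p_i−r)/p_i). (Picone identity for anisotropic operators, pointwise form.) -/

import Mathlib

open Real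

/-!
Let `f` be a subgradient at `x` of a nonnegative positively `p`-homogeneous function `B`. The
subgradient inequality along the ray through `x` gives Euler's identity `f x = p B(x)`, and hence
`l f(y) ≤ B(l y) + (p - 1) B(x) = l ^ p B(y) + (p - 1) B(x)` for all `l > 0`. Optimizing over `l`
yields the Cauchy–Schwarz-type inequality `f(y) ≤ p B(y) ^ (1 / p) B(x) ^ (1 - 1 / p)`. If
`B(x) > 0`, put `σ = (B(y) / B(x)) ^ (1 / p)`; dividing Picone's inequality by `B(x)` then leaves
the scalar Young inequality `r t ^ ((r - 1) / r) σ ≤ σ ^ r + (r - 1) t`.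
-/

lemma mul_div_rpow_eq_rpow_mul_rpow {a b : ℝ} (ha : 0 ≤ a) (hb : 0 < b) (q : ℝ) :
    b * (a / b) ^ q = a ^ q * b ^ (1 - q) := by
  rw [div_rpow ha hb.le, rpow_sub hb, rpow_one]
  ring

lemma mul_rpow_mul_sub_le_rpow {r t x : ℝ} (hr : 1 ≤ r) (ht : 0 ≤ t) (hx : 0 ≤ x) :
    r * t ^ ((r - 1) / r) * x - (r - 1) * t ≤ x ^ r := by
  have hr₀ : 0 < r := zero_lt_one.trans_le hr
  have amgm : (x ^ r) ^ r⁻¹ * t ^ ((r - 1) / r) ≤ r⁻¹ * x ^ r + (r - 1) / r * t :=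
    geom_mean_le_arith_mean2_weighted (inv_nonneg.2 hr₀.le)
      (div_nonneg (sub_nonneg.2 hr) hr₀.le) (rpow_nonneg hx r) ht (by field_simp; ring)
  rw [rpow_rpow_inv hx hr₀.ne'] at amgm
  calc r * t ^ ((r - 1) / r) * x - (r - 1) * t
      = r * (x * t ^ ((r - 1) / r)) - (r - 1) * t := by ring
    _ ≤ r * (r⁻¹ * x ^ r + (r - 1) / r * t) - (r - 1) * t := by gcongr
    _ = x ^ r := by field_simp; ring

lemma mul_rpow_mul_rpow_sub_le_rpow_mul_rpow {p r t a b : ℝ} (hr : 1 ≤ r) (ht : 0 ≤ t)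
    (ha : 0 ≤ a) (hb : 0 < b) :
    r * t ^ ((r - 1) / r) * (a ^ p⁻¹ * b ^ (1 - p⁻¹)) - (r - 1) * t * b ≤
      a ^ (r / p) * b ^ (1 - r / p) := by
  have hab : 0 ≤ a / b := div_nonneg ha hb.le
  rw [← mul_div_rpow_eq_rpow_mul_rpow ha hb, ← mul_div_rpow_eq_rpow_mul_rpow ha hb]
  calc r * t ^ ((r - 1) / r) * (b * (a / b) ^ p⁻¹) - (r - 1) * t * b
      = b * (r * t ^ ((r - 1) / r) * (a / b) ^ p⁻¹ - (r - 1) * t) := by ring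
    _ ≤ b * ((a / b) ^ p⁻¹) ^ r := by
        gcongr
        exact mul_rpow_mul_sub_le_rpow hr ht (rpow_nonneg hab _)
    _ = b * (a / b) ^ (r / p) := by rw [← rpow_mul hab, inv_mul_eq_div]

lemma le_mul_rpow_mul_rpow_of_forall_mul_le_of_pos {p u a c : ℝ} (hp : p ≠ 0) (ha : 0 < a)
    (hc : 0 < c) (h : ∀ l > 0, l * u ≤ l ^ p * a + (p - 1) * c) :
    u ≤ p * (a ^ p⁻¹ * c ^ (1 - p⁻¹)) := by
  -- `l = (c / a) ^ p⁻¹`, that is `l ^ p * a = c`, is the critical point of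
  -- `(l ^ p * a + (p - 1) * c) / l`
  have hca : 0 < c / a := div_pos hc ha
  have balanced := h _ (rpow_pos_of_pos hca p⁻¹)
  rw [rpow_inv_rpow hca.le hp, div_mul_cancel₀ _ ha.ne', ← inv_div, inv_rpow (by positivity),
    inv_mul_le_iff₀ (by positivity)] at balanced
  rw [← mul_div_rpow_eq_rpow_mul_rpow ha.le hc]
  linarith

lemma le_mul_rpow_mul_rpow_of_forall_mul_le {p u a c : ℝ} (hp : 1 < p) (ha : 0 ≤ a)
    (hc : 0 ≤ c) (h : ∀ l > 0, l * u ≤ l ^ p * a + (p - 1) * c) :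
    u ≤ p * (a ^ p⁻¹ * c ^ (1 - p⁻¹)) := by
  have hp₀ : 0 < p := zero_lt_one.trans hp
  have hbound : ∀ ε > 0, u ≤ p * ((a + ε) ^ p⁻¹ * (c + ε) ^ (1 - p⁻¹)) := fun ε hε ↦
    le_mul_rpow_mul_rpow_of_forall_mul_le_of_pos hp₀.ne' (by positivity) (by positivity)
      fun l hl ↦ (h l hl).trans (by
        have : 0 ≤ p - 1 := sub_nonneg.2 hp.le
        gcongr <;> linarith)
  have hcont : Continuous fun ε : ℝ ↦ p * ((a + ε) ^ p⁻¹ * (c + ε) ^ (1 - p⁻¹)) := by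
    have : 0 ≤ p⁻¹ := inv_nonneg.2 hp₀.le
    have : 0 ≤ 1 - p⁻¹ := sub_nonneg.2 (inv_le_one_of_one_le₀ hp.le)
    fun_prop (disch := assumption)
  have hlim := (hcont.tendsto 0).mono_left (nhdsWithin_le_nhds (s := Set.Ioi 0))
  simp only [add_zero] at hlim
  exact ge_of_tendsto hlim (eventually_mem_nhdsWithin.mono hbound)

section Homogeneous

variable {E : Type*} [AddCommGroup E] [Module ℝ E] {p : ℝ} {B : E → ℝ} {f : E →ₗ[ℝ] ℝ} {x : E}

/-- Positive homogeneity of degree `p` of a real function `B`. The factor `l = 0` is included, so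
that `B 0 = 0` whenever `p ≠ 0`. -/
def IsPosHomogeneous (p : ℝ) (B : E → ℝ) : Prop :=
  ∀ l : ℝ, 0 ≤ l → ∀ x : E, B (l • x) = l ^ p * B x

/-- The linear form `f` is a subgradient of `B` at `x`; for convex `B` this takes the place of the
derivative of `B` at `x`. No topology on `E` is involved, so `f` is a plain linear map. -/
def IsSubgradientAt (f : E →ₗ[ℝ] ℝ) (B : E → ℝ) (x : E) : Prop :=
  ∀ y, B x + f (y - x) ≤ B y

lemma isSubgradientAt_of_convexOn_of_hasLineDerivAt (hB : ConvexOn ℝ Set.univ B)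
    (hf : ∀ v, HasLineDerivAt ℝ B (f v) x v) : IsSubgradientAt f B x := by
  intro y
  have hconv : ConvexOn ℝ Set.univ fun l : ℝ ↦ B (x + l • (y - x)) := by
    simpa [Function.comp_def, AffineMap.lineMap_apply, add_comm] using
      hB.comp_affineMap (AffineMap.lineMap x y)
  have hslope :=
    hconv.le_slope_of_hasDerivAt (Set.mem_univ 0) (Set.mem_univ 1) zero_lt_one (hf (y - x))
  simp only [slope_def_field, one_smul, zero_smul, add_zero, add_sub_cancel, sub_zero,
    div_one] at hslope
  linarith

namespace IsPosHomogeneous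

lemma map_zero (hB : IsPosHomogeneous p B) (hp : p ≠ 0) : B 0 = 0 := by
  simpa [zero_rpow hp] using hB 0 le_rfl 0

lemma nonneg_of_convexOn (hB : IsPosHomogeneous p B) (hp : 1 < p)
    (hconv : ConvexOn ℝ Set.univ B) (x : E) : 0 ≤ B x := by
  have midpoint : B x ≤ 1 / 2 * (2 ^ p * B x) := by
    have := hconv.2 (Set.mem_univ 0) (Set.mem_univ ((2 : ℝ) • x))
      one_half_pos.le one_half_pos.le (add_halves (1 : ℝ))
    simpa [smul_smul, hB.map_zero (by positivity), hB 2 zero_le_two] using this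
  have two_lt : (2 : ℝ) < 2 ^ p := self_lt_rpow_of_one_lt one_lt_two hp
  have : 0 ≤ (2 ^ p - 2) * B x := by linarith
  exact nonneg_of_mul_nonneg_right this (sub_pos.2 two_lt)

end IsPosHomogeneous

namespace IsSubgradientAt

lemma map_self_eq_mul (hf : IsSubgradientAt f B x) (hB : IsPosHomogeneous p B) :
    f x = p * B x := by
  have hmin : IsLocalMin (fun l : ℝ ↦ l ^ p * B x - l * f x) 1 := by
    filter_upwards [lt_mem_nhds zero_lt_one] with l hl
    have := hf (l • x)
    rw [hB l hl.le, map_sub, map_smul, smul_eq_mul] at this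
    rw [one_rpow]
    linarith
  have hderiv : HasDerivAt (fun l : ℝ ↦ l ^ p * B x - l * f x) (p * B x - f x) 1 := by
    simpa using ((hasDerivAt_rpow_const (Or.inl one_ne_zero)).mul_const (B x)).fun_sub
      ((hasDerivAt_id (1 : ℝ)).mul_const (f x))
  exact (sub_eq_zero.1 (hmin.hasDerivAt_eq_zero hderiv)).symm

lemma map_le_mul_rpow_mul_rpow (hf : IsSubgradientAt f B x) (hB : IsPosHomogeneous p B)
    (hp : 1 < p) (hnonneg : ∀ y, 0 ≤ B y) (y : E) :
    f y ≤ p * (B y ^ p⁻¹ * B x ^ (1 - p⁻¹)) := by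
  refine le_mul_rpow_mul_rpow_of_forall_mul_le hp (hnonneg y) (hnonneg x) fun l hl ↦ ?_
  have := hf (l • y)
  rw [hB l hl.le, map_sub, map_smul, smul_eq_mul, hf.map_self_eq_mul hB] at this
  linarith

theorem picone_inequality (hf : IsSubgradientAt f B x) (hB : IsPosHomogeneous p B) (hp : 1 < p)
    (hnonneg : ∀ y, 0 ≤ B y) {r t : ℝ} (hr : 1 ≤ r) (ht : 0 ≤ t) (y : E) :
    1 / p * f ((r * t ^ ((r - 1) / r)) • y - ((r - 1) * t) • x) ≤
      B y ^ (r / p) * B x ^ ((p - r) / p) := by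
  have hp₀ : 0 < p := zero_lt_one.trans hp
  have hfy := hf.map_le_mul_rpow_mul_rpow hB hp hnonneg y
  have hlhs : 1 / p * f ((r * t ^ ((r - 1) / r)) • y - ((r - 1) * t) • x) ≤
      r * t ^ ((r - 1) / r) * (B y ^ p⁻¹ * B x ^ (1 - p⁻¹)) - (r - 1) * t * B x := by
    calc 1 / p * f ((r * t ^ ((r - 1) / r)) • y - ((r - 1) * t) • x)
        = 1 / p * (r * t ^ ((r - 1) / r) * f y - (r - 1) * t * (p * B x)) := by
          rw [map_sub, map_smul, map_smul, hf.map_self_eq_mul hB, smul_eq_mul, smul_eq_mul]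
      _ ≤ 1 / p * (r * t ^ ((r - 1) / r) * (p * (B y ^ p⁻¹ * B x ^ (1 - p⁻¹))) -
            (r - 1) * t * (p * B x)) := by gcongr
      _ = r * t ^ ((r - 1) / r) * (B y ^ p⁻¹ * B x ^ (1 - p⁻¹)) - (r - 1) * t * B x := by
          field_simp
  refine hlhs.trans ?_
  rcases (hnonneg x).eq_or_lt' with hx | hx
  · have hexp : 1 - p⁻¹ ≠ 0 := (sub_pos.2 (inv_lt_one_of_one_lt₀ hp)).ne'
    rw [hx, zero_rpow hexp, mul_zero, mul_zero, mul_zero, sub_zero]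
    exact mul_nonneg (rpow_nonneg (hnonneg y) _) (rpow_nonneg le_rfl _)
  · rw [sub_div p, div_self hp₀.ne']
    exact mul_rpow_mul_rpow_sub_le_rpow_mul_rpow hr ht (hnonneg y) hx

end IsSubgradientAt

end Homogeneous

theorem picone_identity_anisotropic_pointwise_general {ι : Type*} (I : Finset ι) {E : ι → Type*}
    [∀ i, AddCommGroup (E i)] [∀ i, Module ℝ (E i)] {p : ι → ℝ} (hp : ∀ i ∈ I, 1 < p i)
    {B : ∀ i, E i → ℝ} (hnonneg : ∀ i ∈ I, ∀ y, 0 ≤ B i y)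
    (hhom : ∀ i ∈ I, IsPosHomogeneous (p i) (B i))
    {r t : ℝ} (hr : 1 ≤ r) (ht : 0 ≤ t) (s s₀ : ∀ i, E i) {f : ∀ i, E i →ₗ[ℝ] ℝ}
    (hf : ∀ i ∈ I, IsSubgradientAt (f i) (B i) (s₀ i)) :
    ∑ i ∈ I, 1 / p i * f i ((r * t ^ ((r - 1) / r)) • s i - ((r - 1) * t) • s₀ i) ≤
      ∑ i ∈ I, B i (s i) ^ (r / p i) * B i (s₀ i) ^ ((p i - r) / p i) :=
  Finset.sum_le_sum fun i hi ↦
    (hf i hi).picone_inequality (hhom i hi) (hp i hi) (hnonneg i hi) hr ht (s i)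

theorem picone_identity_anisotropic_pointwise
    (N : ℕ) (hN : 1 ≤ N) (p : Fin N → ℝ) (hp : ∀ i, 1 < p i)
    (B : Fin N → ℝ → ℝ)
    (hconv : ∀ i, StrictConvexOn ℝ Set.univ (B i))
    (hhom : ∀ i, ∀ t : ℝ, 0 ≤ t → ∀ s : ℝ, B i (t * s) = t ^ (p i) * B i s)
    (hdiff : ∀ i, Differentiable ℝ (B i))
    (r : ℝ) (hr : 1 ≤ r) (t : ℝ) (ht : 0 < t)
    (s s₀ : Fin N → ℝ) (hs₀ : ∀ i, s₀ i ≠ 0) :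
    ∑ i : Fin N, (1 / p i) * deriv (B i) (s₀ i) *
        (r * t ^ ((r - 1)/r) * s i - (r - 1) * t * s₀ i)
      ≤ ∑ i : Fin N, (B i (s i)) ^ (r / p i) * (B i (s₀ i)) ^ ((p i - r) / p i) := by
  have hpos (i : Fin N) : IsPosHomogeneous (p i) (B i) := hhom i
  have hsub (i : Fin N) : IsSubgradientAt (fderiv ℝ (B i) (s₀ i)).toLinearMap (B i) (s₀ i) :=
    isSubgradientAt_of_convexOn_of_hasLineDerivAt (hconv i).convexOn fun v ↦
      (hdiff i (s₀ i)).hasFDerivAt.hasLineDerivAt v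
  have picone := picone_identity_anisotropic_pointwise_general Finset.univ (fun i _ ↦ hp i)
    (fun i _ ↦ (hpos i).nonneg_of_convexOn (hp i) (hconv i).convexOn) (fun i _ ↦ hpos i) hr ht.le
    s s₀ fun i _ ↦ hsub i
  simpa only [ContinuousLinearMap.coe_coe, fderiv_eq_deriv_mul, smul_eq_mul, ← mul_assoc]
    using picone
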